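/- Let 1 ≤ v ≤ m and let B'' ⊆ ℒ^{mn} be a ball. For every A ∈ B'', every x ∈ ℒ and every pair (i,j) with 1 ≤ i ≤ m, 1 ≤ j ≤ n such that A + x E_{ij} ∈ B'', one has ‖M_{v-1}(A + x E_{ij}) − M_{v-1}(A)‖_∞ ≤ ‖x‖ M_{v-2}(B''); consequently, for all A, A' ∈ B'', ‖M_{v-1}(A) − M_{v-1}(A')‖_∞ ≤ ‖A − A'‖_∞ M_{v-2}(B''). -/

import Mathlib

/-!
Common setup: the field `ℒ = 𝔽((X⁻¹))` of formal Laurent series with coefficients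
in a finite field `𝔽` of `k` elements.  We realize `ℒ` as `LaurentSeries 𝔽`
(Hahn series over `ℤ`) in the variable `T = X⁻¹`, so that `X` corresponds to `T⁻¹`
and the polynomial ring `𝔽[X]` corresponds to series supported on nonpositive
exponents.  The absolute value of `x = Σ_{i ≤ N} a_i X^i` (with `a_N ≠ 0`) is
`k^N`, i.e. `k^(-order x)` in terms of the `T`-adic order.
-/

open scoped Classical ENNReal NNReal
open MeasureTheory

noncomputable section

namespace FSBad

/-- The field `ℒ = 𝔽((X⁻¹))`. -/
abbrev L (𝔽 : Type) [Field 𝔽] : Type := LaurentSeries 𝔽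

variable {𝔽 : Type} [Field 𝔽] [Fintype 𝔽]

/-- The absolute value `‖·‖` on `ℒ`: `‖x‖ = k^(deg_X x)`, `‖0‖ = 0`. -/
def lnorm (x : L 𝔽) : ℝ := if x = 0 then 0 else (Fintype.card 𝔽 : ℝ) ^ (-x.order)

/-- Membership in the polynomial ring `𝔽[X] ⊆ ℒ` (polynomials in `X = T⁻¹`). -/
def IsPoly (x : L 𝔽) : Prop := ∀ i : ℤ, 0 < i → x.coeff i = 0

/-- The height (sup-norm) `‖·‖_∞` on `ℒ^ι`. -/
def vnorm {ι : Type*} (x : ι → L 𝔽) : ℝ := ⨆ i, lnorm (x i)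

/-- The closed ball in `ℒ^ι` with centre `c` and radius `ρ`. -/
def vball {ι : Type*} (c : ι → L 𝔽) (ρ : ℝ) : Set (ι → L 𝔽) :=
  {x | vnorm (fun i => x i - c i) ≤ ρ}

/-- `m × n` matrices over `ℒ`, identified with `ℒ^(mn)`. -/
abbrev Mat (𝔽 : Type) [Field 𝔽] (m n : ℕ) : Type := Matrix (Fin m) (Fin n) (L 𝔽)

/-- The height of a matrix, i.e. the sup-norm on `ℒ^(mn)`. -/
def mnorm {m n : ℕ} (A : Mat 𝔽 m n) : ℝ := ⨆ p : Fin m × Fin n, lnorm (A p.1 p.2)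

/-- The closed ball in `ℒ^(mn)` with centre `c` and radius `ρ`. -/
def mball {m n : ℕ} (c : Mat 𝔽 m n) (ρ : ℝ) : Set (Mat 𝔽 m n) :=
  {A | mnorm (A - c) ≤ ρ}

/-- The distance `⟨x⟩` from `x ∈ ℒ^h` to the polynomial lattice `𝔽[X]^h`. -/
def latDist {h : ℕ} (x : Fin h → L 𝔽) : ℝ :=
  sInf {r : ℝ | ∃ p : Fin h → L 𝔽, (∀ i, IsPoly (p i)) ∧ r = vnorm (fun i => x i - p i)}

/-- The set `𝔅(m,n)` of badly approximable systems of `m` linear forms in `n`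
variables over `ℒ`. -/
def Bad (𝔽 : Type) [Field 𝔽] [Fintype 𝔽] (m n : ℕ) : Set (Mat 𝔽 m n) :=
  {A | ∃ K : ℝ, 0 < K ∧ ∀ q : Fin m → L 𝔽, (∀ i, IsPoly (q i)) → q ≠ 0 →
    latDist (Matrix.vecMul q A) ^ n > K / vnorm q ^ m}

/-- The Hausdorff `s`-measure of `E ⊆ ℒ^(mn)`, defined through countable covers by
balls of radii `< δ`, letting `δ → 0` (the infimum over `δ`-covers is nonincreasing
in `δ`, so the limit is the supremum over `δ > 0`). -/
def hMeasure {m n : ℕ} (s : ℝ) (E : Set (Mat 𝔽 m n)) : ℝ≥0∞ :=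
  ⨆ (δ : ℝ) (_ : 0 < δ),
    ⨅ (c : ℕ → Mat 𝔽 m n) (ρ : ℕ → ℝ) (_ : ∀ i, 0 < ρ i ∧ ρ i < δ)
      (_ : E ⊆ ⋃ i, mball (c i) (ρ i)), ∑' i, ENNReal.ofReal (ρ i ^ s)

/-- The Hausdorff dimension of `E ⊆ ℒ^(mn)`. -/
def hdim {m n : ℕ} (E : Set (Mat 𝔽 m n)) : ℝ :=
  sInf {s : ℝ | 0 ≤ s ∧ hMeasure s E = 0}

/-! ### Schmidt `(α,β)`-games on `ℒ^(mn)` -/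

/-- A formal ball: an element of `Ω = ℒ^(mn) × ℝ`. -/
structure FBall (𝔽 : Type) [Field 𝔽] (m n : ℕ) where
  /-- centre -/
  c : Mat 𝔽 m n
  /-- radius -/
  r : ℝ

/-- Formal inclusion of formal balls: `(c₁,ρ₁) ⊆ (c₂,ρ₂)` iff `ρ₁ + ‖c₁ - c₂‖_∞ ≤ ρ₂`. -/
def FBall.ssub {m n : ℕ} (B₁ B₂ : FBall 𝔽 m n) : Prop :=
  B₁.r + mnorm (B₁.c - B₂.c) ≤ B₂.r

/-- The subset of `ℒ^(mn)` determined by a formal ball. -/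
def FBall.toSet {m n : ℕ} (B : FBall 𝔽 m n) : Set (Mat 𝔽 m n) := mball B.c B.r

/-- A strategy for White: given the balls `B₁, …, B_{i+1}` chosen by Black so far,
produce White's next ball. -/
abbrev Strategy (𝔽 : Type) [Field 𝔽] (m n : ℕ) : Type :=
  (i : ℕ) → (Fin (i + 1) → FBall 𝔽 m n) → FBall 𝔽 m n

/-- White's move at stage `i` when following strategy `str` against Black's balls `B`. -/
def wMove {m n : ℕ} (str : Strategy 𝔽 m n) (B : ℕ → FBall 𝔽 m n) (i : ℕ) : FBall 𝔽 m n :=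
  str i fun j => B j.1

/-- Black's move `B_{j+2}` is legal (for parameter `β`): it is a formal subset of
White's ball `W_{j+1}` and has radius `β · ρ(W_{j+1})`. -/
def BlackOk {m n : ℕ} (β : ℝ) (str : Strategy 𝔽 m n) (B : ℕ → FBall 𝔽 m n) (j : ℕ) : Prop :=
  (B (j + 1)).ssub (wMove str B j) ∧ (B (j + 1)).r = β * (wMove str B j).r

/-- White's move `W_{i+1}` is legal (for parameter `α`): it is a formal subset of
Black's ball `B_{i+1}` and has radius `α · ρ(B_{i+1})`. -/
def WhiteOk {m n : ℕ} (α : ℝ) (str : Strategy 𝔽 m n) (B : ℕ → FBall 𝔽 m n) (i : ℕ) : Prop :=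
  (wMove str B i).ssub (B i) ∧ (wMove str B i).r = α * (B i).r

/-- `str` is a winning strategy for White in the `(α,β;S)`-game: against any
sequence of Black balls, White's moves are legal as long as Black has played
legally so far, and if the whole play is legal then the intersection of the
chosen balls is contained in `S`. -/
def WinningStrategy {m n : ℕ} (α β : ℝ) (S : Set (Mat 𝔽 m n)) (str : Strategy 𝔽 m n) : Prop :=
  ∀ B : ℕ → FBall 𝔽 m n, 0 ≤ (B 0).r →
    (∀ i, (∀ j < i, BlackOk β str B j) → WhiteOk α str B i) ∧
    ((∀ j, BlackOk β str B j) → (⋂ i, (B i).toSet) ⊆ S)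

/-- `S` is `(α,β)`-winning. -/
def IsWinningAB {m n : ℕ} (α β : ℝ) (S : Set (Mat 𝔽 m n)) : Prop :=
  ∃ str : Strategy 𝔽 m n, WinningStrategy α β S str

/-- `S` is `α`-winning. -/
def IsWinningA {m n : ℕ} (α : ℝ) (S : Set (Mat 𝔽 m n)) : Prop :=
  ∀ β : ℝ, 0 < β → β < 1 → IsWinningAB α β S

/-- The winning dimension of `S` (a supremum of a set of reals, which is `0` by
convention when the set is empty). -/
def windim {m n : ℕ} (S : Set (Mat 𝔽 m n)) : ℝ :=
  sSup {α : ℝ | 0 < α ∧ α < 1 ∧ IsWinningA α S}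

/-! ### The matrices `Ā`, `Ā^*` and the quantities `M_v`, `D_v`, `∇D_v` -/

/-- `Ā = [[A, I_m], [I_n, 0]]`. Rows are indexed by `Fin m ⊕ Fin n`
(coordinates `q_1, …, q_{m+n}`), columns by `Fin n ⊕ Fin m`. -/
def Abar {m n : ℕ} (A : Mat 𝔽 m n) : Matrix (Fin m ⊕ Fin n) (Fin n ⊕ Fin m) (L 𝔽) :=
  Matrix.fromBlocks A 1 1 0

/-- `Ā^* = [[Aᵀ, I_n], [I_m, 0]]`. Rows are indexed by `Fin n ⊕ Fin m`,
columns by `Fin m ⊕ Fin n`. -/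
def AbarStar {m n : ℕ} (A : Mat 𝔽 m n) : Matrix (Fin n ⊕ Fin m) (Fin m ⊕ Fin n) (L 𝔽) :=
  Matrix.fromBlocks A.transpose 1 1 0

/-- The standard bilinear form `x·y = Σ_i x_i y_i` on `ℒ^ι`. -/
def dotL {ι : Type*} [Fintype ι] (x y : ι → L 𝔽) : L 𝔽 := ∑ i, x i * y i

/-- Strictly increasing `v`-tuples `1 ≤ i_1 < ⋯ < i_v ≤ m`. -/
def IncTuple (v m : ℕ) : Type := {f : Fin v → Fin m // StrictMono f}

/-- The vector `M_v(A) ∈ ℒ^(C(m,v)²)` of the determinants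
`det (y_{i_r} · C_{j_s}(Ā^*))_{1 ≤ r,s ≤ v}` over all strictly increasing index
tuples.  (For `v = 0` every coordinate is an empty determinant, i.e. `1`.) -/
def MvVec {m n : ℕ} (y : Fin m → (Fin n ⊕ Fin m → L 𝔽)) (v : ℕ) (A : Mat 𝔽 m n) :
    IncTuple v m × IncTuple v m → L 𝔽 := fun p =>
  Matrix.det (Matrix.of fun r s : Fin v =>
    dotL (y (p.1.1 r)) fun t => AbarStar A t (Sum.inl (p.2.1 s)))

/-- `‖M_v(A)‖_∞`. -/
def MvNorm {m n : ℕ} (y : Fin m → (Fin n ⊕ Fin m → L 𝔽)) (v : ℕ) (A : Mat 𝔽 m n) : ℝ :=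
  vnorm (MvVec y v A)

/-- `M_v(K) = max_{A ∈ K} ‖M_v(A)‖_∞` for `K ⊆ ℒ^(mn)`. -/
def MvSet {m n : ℕ} (y : Fin m → (Fin n ⊕ Fin m → L 𝔽)) (v : ℕ) (K : Set (Mat 𝔽 m n)) : ℝ :=
  sSup {r : ℝ | ∃ A ∈ K, r = MvNorm y v A}

/-- `D_v(A) = det (y_h · C_l(Ā^*))_{1 ≤ h,l ≤ v}`. -/
def Dv {m n : ℕ} (y : Fin m → (Fin n ⊕ Fin m → L 𝔽)) (v : ℕ) (hv : v ≤ m)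
    (A : Mat 𝔽 m n) : L 𝔽 :=
  Matrix.det (Matrix.of fun h l : Fin v =>
    dotL (y (Fin.castLE hv h)) fun t => AbarStar A t (Sum.inl (Fin.castLE hv l)))

/-- The discrete gradient `∇D_v(A) ∈ ℒ^(mn)`, with coordinates
`D_v(A + E_{ij}) - D_v(A)`. -/
def gradDv {m n : ℕ} (y : Fin m → (Fin n ⊕ Fin m → L 𝔽)) (v : ℕ) (hv : v ≤ m)
    (A : Mat 𝔽 m n) : Fin m × Fin n → L 𝔽 := fun p =>
  Dv y v hv (A + Matrix.single p.1 p.2 1) - Dv y v hv A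

/-- `y_1, …, y_m ∈ ℒ^(m+n)` form an orthonormal system: `y_h · y_{h'} = δ_{h h'}`
and `‖t_1 y_1 + ⋯ + t_m y_m‖_∞ = max_h ‖t_h‖`. -/
def OrthoSystem {m n : ℕ} (y : Fin m → (Fin n ⊕ Fin m → L 𝔽)) : Prop :=
  (∀ h h', dotL (y h) (y h') = if h = h' then 1 else 0) ∧
  (∀ t : Fin m → L 𝔽, vnorm (fun r => ∑ h, t h * y h r) = ⨆ h, lnorm (t h))

/-! ### Distance functions, parallelepipeds and successive minima -/

/-- The `j`-th successive minimum of a distance function `F` on `ℒ^N`: the infimum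
of all `λ > 0` such that `{F < λ}` contains `j` linearly independent points of
`𝔽[X]^N`. -/
def succMin {N : ℕ} (F : (Fin N → L 𝔽) → ℝ) (j : ℕ) : ℝ :=
  sInf {lam : ℝ | 0 < lam ∧ ∃ v : Fin j → (Fin N → L 𝔽),
    (∀ r, ∀ i, IsPoly (v r i)) ∧ LinearIndependent (L 𝔽) v ∧ ∀ r, F (v r) < lam}

/-- The distance function `F_A(x) = max_j c_j⁻¹ ‖Σ_i x_i a_{ij}‖`. -/
def FA {N : ℕ} (A : Matrix (Fin N) (Fin N) (L 𝔽)) (c : Fin N → ℝ)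
    (x : Fin N → L 𝔽) : ℝ :=
  ⨆ j, (c j)⁻¹ * lnorm (∑ i, x i * A i j)

/-- The parallelepiped `P_A(λ) = {x ∈ ℒ^N : F_A(x) < λ}`. -/
def PA {N : ℕ} (A : Matrix (Fin N) (Fin N) (L 𝔽)) (c : Fin N → ℝ) (lam : ℝ) :
    Set (Fin N → L 𝔽) := {x | FA A c x < lam}

/-- The polar distance function `F_A^*(y) = sup_{x ≠ 0} ‖x·y‖ / F_A(x)`. -/
def FAstar {N : ℕ} (A : Matrix (Fin N) (Fin N) (L 𝔽)) (c : Fin N → ℝ)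
    (y : Fin N → L 𝔽) : ℝ :=
  ⨆ x : {x : Fin N → L 𝔽 // x ≠ 0}, lnorm (dotL x.1 y) / FA A c x.1

/-! ### Haar measure, characterized by translation invariance and normalization -/

/-- The Borel σ-algebra on `ℒ^N`, generated by the balls. -/
def vecSigma (𝔽 : Type) [Field 𝔽] [Fintype 𝔽] (N : ℕ) : MeasurableSpace (Fin N → L 𝔽) :=
  MeasurableSpace.generateFrom {s | ∃ c ρ, (0 : ℝ) < ρ ∧ s = vball c ρ}

/-- `μ` is the Haar measure on `ℒ^N`: translation invariant and normalized so that
the unit ball `I^N` has measure `1` (these properties determine it uniquely). -/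
def IsHaarVec {N : ℕ} (μ : @Measure (Fin N → L 𝔽) (vecSigma 𝔽 N)) : Prop :=
  (∀ (v : Fin N → L 𝔽) (s : Set (Fin N → L 𝔽)), μ ((fun x => x + v) ⁻¹' s) = μ s) ∧
  μ {x | ∀ i, lnorm (x i) < 1} = 1

/-- The Borel σ-algebra on `ℒ^(mn)`, generated by the balls. -/
def matSigma (𝔽 : Type) [Field 𝔽] [Fintype 𝔽] (m n : ℕ) : MeasurableSpace (Mat 𝔽 m n) :=
  MeasurableSpace.generateFrom {s | ∃ c ρ, (0 : ℝ) < ρ ∧ s = mball c ρ}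

/-- `μ` is the Haar measure on `ℒ^(mn)`: translation invariant and normalized so
that the unit ball `I^(mn)` has measure `1`. -/
def IsHaarMat {m n : ℕ} (μ : @Measure (Mat 𝔽 m n) (matSigma 𝔽 m n)) : Prop :=
  (∀ (v : Mat 𝔽 m n) (s : Set (Mat 𝔽 m n)), μ ((fun x => x + v) ⁻¹' s) = μ s) ∧
  μ {A | ∀ i j, lnorm (A i j) < 1} = 1

/-! ### The constants of Section 3 -/

/-- `τ = m/(m+n)`. -/
def tau (m n : ℕ) : ℝ := m / (m + n)

/-- `δ = R^(-m(m+n)²)`. -/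
def del (R : ℝ) (m n : ℕ) : ℝ := R ^ (-((m : ℝ) * ((m : ℝ) + n) ^ 2))

/-- `δ* = R^(-n(m+n)²)`. -/
def delStar (R : ℝ) (m n : ℕ) : ℝ := R ^ (-((n : ℝ) * ((m : ℝ) + n) ^ 2))

/-!
Write `Y(A)` for the `m × m` matrix of the pairings `y_h · C_l(Ā^*)`, so that the coordinates of
`M_u(A)` are the `u × u` minors of `Y(A)`. Adding `x E_{ij}` to `A` changes only the `i`-th column
of `Y(A)`, by the vector `(x y_{hj})_h` whose entries are at most `‖x‖` since `‖y_h‖_∞ ≤ 1`.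
Expanding a minor along that column, the ultrametric inequality bounds its change by `‖x‖` times
the largest minor of order `u - 1`.

An arbitrary displacement `A - A'` is a sum of multiples of the `E_{ij}`. An ultrametric ball is a
coset of an additive group, so adding these one at a time never leaves the ball, and the ultrametric
inequality bounds the total change by the largest of the single steps.
-/

section Ultrametric

theorem isNonarchimedean_map_add_sum_sub_le {G H ι : Type*} [AddCommMonoid G] [AddGroup H]
    {N : H → ℝ} (hN : IsNonarchimedean N) {g : G → H} {K : Set G} {C : ℝ} {d : ι → G}
    {s : Finset ι} {a : G} (ha : a ∈ K) (hK : ∀ b ∈ K, ∀ i ∈ s, b + d i ∈ K) (h0 : N 0 ≤ C)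
    (hstep : ∀ b ∈ K, ∀ i ∈ s, N (g (b + d i) - g b) ≤ C) :
    N (g (a + ∑ i ∈ s, d i) - g a) ≤ C := by
  suffices a + ∑ i ∈ s, d i ∈ K ∧ N (g (a + ∑ i ∈ s, d i) - g a) ≤ C from this.2
  induction s using Finset.induction_on with
  | empty => simpa using ⟨ha, h0⟩
  | insert i s hi ih =>
    obtain ⟨hmem, hle⟩ := ih (fun b hb k hk => hK b hb k (Finset.mem_insert_of_mem hk))
      (fun b hb k hk => hstep b hb k (Finset.mem_insert_of_mem hk))
    have hsum : a + ∑ k ∈ insert i s, d k = a + ∑ k ∈ s, d k + d i := by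
      rw [Finset.sum_insert hi, add_comm (d i), add_assoc]
    rw [hsum, ← sub_add_sub_cancel _ (g (a + ∑ k ∈ s, d k))]
    have hi' := Finset.mem_insert_self i s
    exact ⟨hK _ hmem i hi', (hN _ _).trans (max_le (hstep _ hmem i hi') hle)⟩

variable {R : Type*} [CommRing R] {f : AbsoluteValue R ℝ}

theorem abv_det_le_of_column_le (hf : IsNonarchimedean f) {k : ℕ}
    (M : Matrix (Fin (k + 1)) (Fin (k + 1)) R) (s : Fin (k + 1)) {a b : ℝ}
    (hcol : ∀ r, f (M r s) ≤ a)
    (hminor : ∀ r, f (M.submatrix (Fin.succAbove r) s.succAbove).det ≤ b) :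
    f M.det ≤ a * b := by
  rw [Matrix.det_succ_column M s]
  refine hf.apply_sum_univ_le.trans (ciSup_le fun r => ?_)
  have hsign : ∀ z : R, f ((-1) ^ (r + s : ℕ) * z) = f z := fun z => by
    rcases neg_one_pow_eq_or R (r + s) with h | h <;> simp [h]
  rw [mul_assoc, hsign, f.map_mul]
  exact mul_le_mul (hcol r) (hminor r) (f.nonneg _) ((f.nonneg _).trans (hcol r))

theorem abv_det_updateCol_add_sub_det_le (hf : IsNonarchimedean f) {k : ℕ}
    (M : Matrix (Fin (k + 1)) (Fin (k + 1)) R) (s : Fin (k + 1)) {w : Fin (k + 1) → R} {a b : ℝ}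
    (hw : ∀ r, f (w r) ≤ a)
    (hminor : ∀ r, f (M.submatrix (Fin.succAbove r) s.succAbove).det ≤ b) :
    f ((M.updateCol s (M.col s + w)).det - M.det) ≤ a * b := by
  have hdiff : (M.updateCol s (M.col s + w)).det - M.det = (M.updateCol s w).det := by
    have hself : M.updateCol s (M.col s) = M := M.updateCol_eq_self s
    rw [Matrix.det_updateCol_add, hself, add_sub_cancel_left]
  rw [hdiff]
  exact abv_det_le_of_column_le hf _ s (by simpa using hw) (by simpa using hminor)

end Ultrametric

section Submatrix

variable {α m' n' p' q' : Type*} [DecidableEq n'] (M : Matrix m' n' α) (e : p' → m') {g : q' → n'}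

theorem submatrix_updateCol_of_injective [DecidableEq q'] (hg : g.Injective) (s : q')
    (w : m' → α) :
    (M.updateCol (g s) w).submatrix e g = (M.submatrix e g).updateCol s (w ∘ e) := by
  ext a b
  simp [Matrix.updateCol_apply, hg.eq_iff]

theorem submatrix_updateCol_of_notMem_range {i : n'} (hi : i ∉ Set.range g) (w : m' → α) :
    (M.updateCol i w).submatrix e g = M.submatrix e g := by
  ext a b
  exact Matrix.updateCol_ne fun h => hi ⟨b, h⟩

end Submatrix

section Norm

theorem lnorm_nonneg (x : L 𝔽) : 0 ≤ lnorm x := by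
  unfold lnorm
  split_ifs <;> positivity

theorem lnorm_mul (x y : L 𝔽) : lnorm (x * y) = lnorm x * lnorm y := by
  by_cases hx : x = 0
  · simp [lnorm, hx]
  by_cases hy : y = 0
  · simp [lnorm, hy]
  have hk : (Fintype.card 𝔽 : ℝ) ≠ 0 := by simp
  simp only [lnorm, hx, hy, mul_eq_zero, or_self, if_false, HahnSeries.order_mul hx hy, neg_add,
    zpow_add₀ hk]

theorem isNonarchimedean_lnorm : IsNonarchimedean (lnorm : L 𝔽 → ℝ) := by
  intro x y
  by_cases hx : x = 0
  · simp [hx]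
  by_cases hy : y = 0
  · simp [hy]
  by_cases hxy : x + y = 0
  · exact le_max_of_le_left (by simpa [hxy, lnorm] using lnorm_nonneg x)
  have hk : (1 : ℝ) ≤ Fintype.card 𝔽 := by exact_mod_cast Fintype.card_pos
  simp only [lnorm, hx, hy, hxy, if_false, le_max_iff]
  exact (min_le_iff.1 (HahnSeries.min_order_le_order_add hxy)).imp
    (fun h => zpow_le_zpow_right₀ hk (neg_le_neg h))
    (fun h => zpow_le_zpow_right₀ hk (neg_le_neg h))

variable (𝔽) in
/-- The absolute value `‖·‖` of `ℒ`, bundled so that Mathlib's lemmas on absolute values apply. -/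
def lnormAbv : AbsoluteValue (L 𝔽) ℝ where
  toFun := lnorm
  map_mul' := lnorm_mul
  nonneg' := lnorm_nonneg
  eq_zero' x := by
    have hk : (Fintype.card 𝔽 : ℝ) ≠ 0 := by simp
    by_cases hx : x = 0 <;> simp [lnorm, hx, zpow_ne_zero _ hk]
  add_le' _ _ := isNonarchimedean_lnorm.add_le lnorm_nonneg

theorem isNonarchimedean_lnormAbv : IsNonarchimedean (lnormAbv 𝔽) := isNonarchimedean_lnorm

theorem lnorm_zero : lnorm (0 : L 𝔽) = 0 := (lnormAbv 𝔽).map_zero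

theorem lnorm_one : lnorm (1 : L 𝔽) = 1 := (lnormAbv 𝔽).map_one

theorem lnorm_neg (x : L 𝔽) : lnorm (-x) = lnorm x := (lnormAbv 𝔽).map_neg x

variable {ι : Type*}

theorem vnorm_nonneg (x : ι → L 𝔽) : 0 ≤ vnorm x := Real.iSup_nonneg fun _ => lnorm_nonneg _

theorem vnorm_zero : vnorm (0 : ι → L 𝔽) = 0 := by simp [vnorm, lnorm_zero]

theorem vnorm_neg (x : ι → L 𝔽) : vnorm (-x) = vnorm x := by simp [vnorm, lnorm_neg]

theorem vnorm_le {x : ι → L 𝔽} {C : ℝ} (hC : 0 ≤ C) (h : ∀ i, lnorm (x i) ≤ C) : vnorm x ≤ C :=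
  Real.iSup_le h hC

variable [Finite ι]

theorem lnorm_le_vnorm (x : ι → L 𝔽) (i : ι) : lnorm (x i) ≤ vnorm x :=
  Finite.le_ciSup_of_le i le_rfl

theorem isNonarchimedean_vnorm : IsNonarchimedean (vnorm : (ι → L 𝔽) → ℝ) := fun x y =>
  vnorm_le (le_max_of_le_left (vnorm_nonneg x)) fun i =>
    (isNonarchimedean_lnorm _ _).trans (max_le_max (lnorm_le_vnorm x i) (lnorm_le_vnorm y i))

theorem vnorm_single [DecidableEq ι] (i : ι) (x : L 𝔽) : vnorm (Pi.single i x) = lnorm x := by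
  refine le_antisymm (vnorm_le (lnorm_nonneg x) fun k => ?_) ?_
  · by_cases hk : k = i
    · simp [hk]
    · simpa [hk, lnorm_zero] using lnorm_nonneg x
  · simpa using lnorm_le_vnorm (Pi.single i x) i

omit [Finite ι] in
theorem lnorm_dotL_le [Fintype ι] (x y : ι → L 𝔽) : lnorm (dotL x y) ≤ vnorm x * vnorm y := by
  refine isNonarchimedean_lnormAbv.apply_sum_univ_le.trans
    (Real.iSup_le (fun i => ?_) (mul_nonneg (vnorm_nonneg x) (vnorm_nonneg y)))
  rw [(lnormAbv 𝔽).map_mul]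
  exact mul_le_mul (lnorm_le_vnorm x i) (lnorm_le_vnorm y i) (lnorm_nonneg _) (vnorm_nonneg x)

end Norm

section MatrixBall

variable {m n : ℕ} {A B c : Mat 𝔽 m n} {ρ : ℝ}

theorem mnorm_eq_vnorm (A : Mat 𝔽 m n) :
    mnorm A = vnorm fun q : Fin m × Fin n => A q.1 q.2 := rfl

theorem lnorm_le_mnorm (A : Mat 𝔽 m n) (i : Fin m) (j : Fin n) : lnorm (A i j) ≤ mnorm A :=
  lnorm_le_vnorm (fun q : Fin m × Fin n => A q.1 q.2) (i, j)

theorem mnorm_nonneg (A : Mat 𝔽 m n) : 0 ≤ mnorm A := vnorm_nonneg _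

theorem isNonarchimedean_mnorm : IsNonarchimedean (mnorm : Mat 𝔽 m n → ℝ) := fun A B =>
  isNonarchimedean_vnorm (fun q : Fin m × Fin n => A q.1 q.2) fun q => B q.1 q.2

theorem mnorm_sub_comm (A B : Mat 𝔽 m n) : mnorm (A - B) = mnorm (B - A) := by
  rw [← neg_sub]
  exact vnorm_neg fun q : Fin m × Fin n => (B - A) q.1 q.2

theorem mnorm_single (i : Fin m) (j : Fin n) (x : L 𝔽) :
    mnorm (Matrix.single i j x) = lnorm x := by
  have hpi : (fun q : Fin m × Fin n => Matrix.single i j x q.1 q.2) = Pi.single (i, j) x := by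
    ext1 q
    simp [Matrix.single_apply, Pi.single_apply, Prod.ext_iff, eq_comm]
  rw [mnorm_eq_vnorm, hpi, vnorm_single]

theorem mnorm_le_of_mem_mball (hA : A ∈ mball c ρ) : mnorm A ≤ max ρ (mnorm c) := by
  simpa using (isNonarchimedean_mnorm (A - c) c).trans (max_le_max_right _ hA)

theorem mnorm_sub_le_of_mem_mball (hA : A ∈ mball c ρ) (hB : B ∈ mball c ρ) :
    mnorm (A - B) ≤ ρ := by
  rw [← sub_add_sub_cancel A c B]
  exact (isNonarchimedean_mnorm _ _).trans (max_le hA (mnorm_sub_comm c B ▸ hB))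

theorem add_mem_mball (hA : A ∈ mball c ρ) (hB : mnorm B ≤ ρ) : A + B ∈ mball c ρ := by
  rw [mball, Set.mem_ofPred_eq, add_sub_right_comm]
  exact (isNonarchimedean_mnorm _ _).trans (max_le hA hB)

end MatrixBall

section Minors

variable {m n : ℕ}

instance (u m : ℕ) : Finite (IncTuple u m) := inferInstanceAs (Finite {_f : Fin u → Fin m // _})

/-- The increasing tuple obtained by deleting the `r`-th entry; it indexes the rows or columns
left in a cofactor. -/
def IncTuple.erase {u : ℕ} (p : IncTuple (u + 1) m) (r : Fin (u + 1)) : IncTuple u m :=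
  ⟨p.1 ∘ r.succAbove, p.2.comp (Fin.strictMono_succAbove r)⟩

/-- The matrix of the pairings `y_h · C_l(Ā^*)`, `1 ≤ h, l ≤ m`, whose `u × u` minors are the
coordinates of `M_u(A)`. -/
def pairing (y : Fin m → (Fin n ⊕ Fin m → L 𝔽)) (A : Mat 𝔽 m n) :
    Matrix (Fin m) (Fin m) (L 𝔽) :=
  Matrix.of fun h l => dotL (y h) fun t => AbarStar A t (Sum.inl l)

variable (y : Fin m → (Fin n ⊕ Fin m → L 𝔽)) (u : ℕ) (A : Mat 𝔽 m n)

section Algebra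

omit [Fintype 𝔽]

theorem MvVec_eq_det_submatrix (p : IncTuple u m × IncTuple u m) :
    MvVec y u A p = ((pairing y A).submatrix p.1.1 p.2.1).det := rfl

theorem MvVec_zero : MvVec y 0 A = 1 := funext fun _ => Matrix.det_fin_zero

theorem pairing_apply (h l : Fin m) :
    pairing y A h l = ∑ j, y h (Sum.inl j) * A l j + y h (Sum.inr l) := by
  simp [pairing, dotL, AbarStar, Matrix.one_apply]

theorem pairing_add_single (i : Fin m) (j : Fin n) (x : L 𝔽) :
    pairing y (A + Matrix.single i j x) = (pairing y A).updateCol i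
      ((pairing y A).col i + fun h => y h (Sum.inl j) * x) := by
  ext h l
  by_cases hl : l = i
  · subst hl
    simp [pairing_apply, mul_add, Finset.sum_add_distrib, Matrix.single_apply, add_right_comm]
  · simp [pairing_apply, hl, Ne.symm hl]

end Algebra

theorem vnorm_AbarStar_inl_le (l : Fin m) :
    vnorm (fun t => AbarStar A t (Sum.inl l)) ≤ max 1 (mnorm A) := by
  refine vnorm_le (le_max_of_le_left zero_le_one) ?_
  rintro (j | h)
  · exact le_max_of_le_right (lnorm_le_mnorm A l j)
  · refine le_max_of_le_left ?_
    by_cases hl : h = l <;> simp [AbarStar, hl, lnorm_one, lnorm_zero]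

theorem MvNorm_le : MvNorm y u A ≤ u.factorial * ((⨆ h, vnorm (y h)) * max 1 (mnorm A)) ^ u := by
  have hy : 0 ≤ ⨆ h, vnorm (y h) := Real.iSup_nonneg fun h => vnorm_nonneg (y h)
  have hentry : ∀ h l, lnorm (pairing y A h l) ≤ (⨆ h, vnorm (y h)) * max 1 (mnorm A) :=
    fun h l => (lnorm_dotL_le _ _).trans <| mul_le_mul (Finite.le_ciSup_of_le h le_rfl)
      (vnorm_AbarStar_inl_le A l) (vnorm_nonneg _) hy
  refine vnorm_le (by positivity) fun p => ?_
  simpa using! Matrix.det_le (abv := lnormAbv 𝔽)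
    (A := (pairing y A).submatrix p.1.1 p.2.1) fun r s => hentry _ _

theorem MvNorm_nonneg : 0 ≤ MvNorm y u A := vnorm_nonneg _

theorem MvSet_nonneg (K : Set (Mat 𝔽 m n)) : 0 ≤ MvSet y u K := by
  refine Real.sSup_nonneg ?_
  rintro _ ⟨A, -, rfl⟩
  exact MvNorm_nonneg y u A

variable {A} in
theorem MvNorm_le_MvSet_of_mem_mball {c : Mat 𝔽 m n} {ρ : ℝ} (hA : A ∈ mball c ρ) :
    MvNorm y u A ≤ MvSet y u (mball c ρ) := by
  have hy : 0 ≤ ⨆ h, vnorm (y h) := Real.iSup_nonneg fun h => vnorm_nonneg (y h)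
  refine le_csSup ⟨u.factorial * ((⨆ h, vnorm (y h)) * max 1 (max ρ (mnorm c))) ^ u, ?_⟩
    ⟨A, hA, rfl⟩
  rintro _ ⟨B, hB, rfl⟩
  refine (MvNorm_le y u B).trans ?_
  gcongr
  exact mnorm_le_of_mem_mball hB

end Minors

section PartialDerivative

variable {m n : ℕ} {y : Fin m → (Fin n ⊕ Fin m → L 𝔽)}

theorem OrthoSystem.vnorm_eq_one (hy : OrthoSystem y) (h : Fin m) : vnorm (y h) = 1 := by
  have hsum : (fun r => ∑ h', (Pi.single h 1 : Fin m → L 𝔽) h' * y h' r) = y h := by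
    ext1 r
    simp [Pi.single_apply]
  calc vnorm (y h) = vnorm (Pi.single h 1 : Fin m → L 𝔽) := hsum ▸ hy.2 (Pi.single h 1)
    _ = 1 := by rw [vnorm_single, lnorm_one]

theorem lnorm_MvVec_succ_add_single_sub_le (hy : ∀ h, vnorm (y h) ≤ 1) (u : ℕ) (A : Mat 𝔽 m n)
    (x : L 𝔽) (i : Fin m) (j : Fin n) (p : IncTuple (u + 1) m × IncTuple (u + 1) m) :
    lnorm (MvVec y (u + 1) (A + Matrix.single i j x) p - MvVec y (u + 1) A p) ≤
      lnorm x * MvNorm y u A := by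
  rw [MvVec_eq_det_submatrix, MvVec_eq_det_submatrix, pairing_add_single]
  by_cases hi : i ∈ Set.range p.2.1
  · obtain ⟨s, rfl⟩ := hi
    rw [submatrix_updateCol_of_injective _ _ p.2.2.injective]
    refine abv_det_updateCol_add_sub_det_le isNonarchimedean_lnormAbv _ s
      (w := fun r => y (p.1.1 r) (Sum.inl j) * x) (fun r => ?_)
      fun r => lnorm_le_vnorm (MvVec y u A) (p.1.erase r, p.2.erase s)
    rw [(lnormAbv 𝔽).map_mul]
    exact mul_le_of_le_one_left (lnorm_nonneg x) ((lnorm_le_vnorm _ _).trans (hy _))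
  · rw [submatrix_updateCol_of_notMem_range _ _ hi, sub_self, lnorm_zero]
    exact mul_nonneg (lnorm_nonneg x) (MvNorm_nonneg y u A)

-- For `u = 0` the truncated `u - 1` agrees with the paper's convention `M_{-1} = M_0 = 1`.
theorem vnorm_MvVec_add_single_sub_le (hy : ∀ h, vnorm (y h) ≤ 1) (u : ℕ) (A : Mat 𝔽 m n)
    (x : L 𝔽) (i : Fin m) (j : Fin n) :
    vnorm (MvVec y u (A + Matrix.single i j x) - MvVec y u A) ≤
      lnorm x * MvNorm y (u - 1) A := by
  have hC := mul_nonneg (lnorm_nonneg x) (MvNorm_nonneg y (u - 1) A)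
  cases u with
  | zero => simpa [MvVec_zero, vnorm_zero] using hC
  | succ u => exact vnorm_le hC (lnorm_MvVec_succ_add_single_sub_le hy u A x i j)

theorem Mv_partial_derivative_bound_general (hy : ∀ h, vnorm (y h) ≤ 1) (u : ℕ)
    (c : Mat 𝔽 m n) (ρ : ℝ) :
    (∀ A ∈ mball c ρ, ∀ (x : L 𝔽) (i : Fin m) (j : Fin n),
      vnorm (MvVec y u (A + Matrix.single i j x) - MvVec y u A) ≤
        lnorm x * MvSet y (u - 1) (mball c ρ)) ∧
    (∀ A ∈ mball c ρ, ∀ A' ∈ mball c ρ,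
      vnorm (MvVec y u A - MvVec y u A') ≤
        mnorm (A - A') * MvSet y (u - 1) (mball c ρ)) := by
  have hpartial : ∀ A ∈ mball c ρ, ∀ (x : L 𝔽) (i : Fin m) (j : Fin n),
      vnorm (MvVec y u (A + Matrix.single i j x) - MvVec y u A) ≤
        lnorm x * MvSet y (u - 1) (mball c ρ) := fun A hA x i j =>
    (vnorm_MvVec_add_single_sub_le hy u A x i j).trans <|
      mul_le_mul_of_nonneg_left (MvNorm_le_MvSet_of_mem_mball y _ hA) (lnorm_nonneg x)
  refine ⟨hpartial, fun A hA A' hA' => ?_⟩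
  have hM := MvSet_nonneg y (u - 1) (mball c ρ)
  have hsum : A = A' + ∑ q : Fin m × Fin n, Matrix.single q.1 q.2 ((A - A') q.1 q.2) := by
    rw [Fintype.sum_prod_type, ← Matrix.matrix_eq_sum_single (A - A'), add_sub_cancel]
  conv_lhs => rw [hsum]
  refine isNonarchimedean_map_add_sum_sub_le isNonarchimedean_vnorm hA' (fun B hB q _ => ?_) ?_
    fun B hB q _ => ?_
  · exact add_mem_mball hB <| (mnorm_single _ _ _).trans_le <|
      (lnorm_le_mnorm _ _ _).trans (mnorm_sub_le_of_mem_mball hA hA')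
  · exact vnorm_zero.trans_le (mul_nonneg (mnorm_nonneg _) hM)
  · exact (hpartial B hB _ _ _).trans <|
      mul_le_mul_of_nonneg_right (lnorm_le_mnorm _ _ _) hM

end PartialDerivative

/-- **Theorem (Statement 18).** (Inequality (6) and its consequence.)  On a ball `B''`,
`‖M_{v-1}(A + x E_{ij}) - M_{v-1}(A)‖_∞ ≤ ‖x‖ M_{v-2}(B'')`, and consequently
`‖M_{v-1}(A) - M_{v-1}(A')‖_∞ ≤ ‖A - A'‖_∞ M_{v-2}(B'')` for all `A, A' ∈ B''`. -/
theorem Mv_partial_derivative_bound (𝔽 : Type) [Field 𝔽] [Fintype 𝔽] (m n : ℕ)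
    (hm : 0 < m) (hn : 0 < n)
    (y : Fin m → (Fin n ⊕ Fin m → L 𝔽)) (hy : OrthoSystem y)
    (v : ℕ) (hv1 : 1 ≤ v) (hv : v ≤ m)
    (c'' : Mat 𝔽 m n) (ρ'' : ℝ) :
    (∀ A ∈ mball c'' ρ'', ∀ (x : L 𝔽) (i : Fin m) (j : Fin n),
      A + Matrix.single i j x ∈ mball c'' ρ'' →
      vnorm (fun p => MvVec y (v - 1) (A + Matrix.single i j x) p -
          MvVec y (v - 1) A p) ≤
        lnorm x * MvSet y (v - 2) (mball c'' ρ'')) ∧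
    (∀ A ∈ mball c'' ρ'', ∀ A' ∈ mball c'' ρ'',
      vnorm (fun p => MvVec y (v - 1) A p - MvVec y (v - 1) A' p) ≤
        mnorm (A - A') * MvSet y (v - 2) (mball c'' ρ'')) := by
  have hbound := Mv_partial_derivative_bound_general (fun h => (hy.vnorm_eq_one h).le) (v - 1)
    c'' ρ''
  exact ⟨fun A hA x i j _ => hbound.1 A hA x i j, hbound.2⟩

end FSBad
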